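/- arXiv:2403.07271 — 7 statements merged into one kernel-verified Lean document; each statement's English description precedes it below -/
import Mathlib

section
/- Let H : ℝ^d → ℝ^d have a fixed point θ* = H(θ*), and suppose there are γ ∈ (0,1) and ρ > 0 such that: (i) H is a γ-contraction on the closed ball B̄(θ*, ρ), i.e. ‖H(a) − H(b)‖ ≤ γ‖a − b‖ for all a, b in the ball; (ii) the residual map r(θ) := H(θ) − θ is differentiable on B̄(θ*, ρ) with derivative Lipschitz continuous there with constant L_r ≥ 0. Fix an integer m ≥ 1 and a constant M_α ≥ 1. Consider any Anderson-acceleration sequence (θ^k)_{k≥0}: θ^0 given, and for each k, with m_k = min(m, k), coefficients α^k_0, ..., α^k_{m_k} ∈ ℝ satisfying Σ_j α^k_j = 1, Σ_j |α^k_j| ≤ M_α, and ‖Σ_j α^k_j r(θ^{k−m_k+j})‖ ≤ ‖r(θ^k)‖, with update θ^{k+1} = Σ_j α^k_j H(θ^{k−m_k+j}). Then for every γ̂ ∈ (γ, 1) there exists ρ_0 > 0 such that whenever ‖θ^0 − θ*‖ ≤ ρ_0, the iterates satisfy, for all k ≥ 0: ‖H(θ^k) − θ^k‖ ≤ γ̂^k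 ‖H(θ^0) − θ^0‖ and ‖θ^k − θ*‖ ≤ ((1+γ)/(1−γ)) γ̂^k ‖θ^0 − θ*‖; in particular θ^k → θ* R-linearly. -/
/-!
Let `T` be the derivative of `H` at `θs`. Contractivity gives `‖T‖ ≤ γ`, and the Lipschitz derivative
gives `H x = θs + T (x - θs) + O(‖x - θs‖²)`. Writing `e j = θ j - θs` and `r j = H (θ j) - θ j`,
the Anderson update satisfies `e (k + 1) - ∑ α j • e j = ∑ α j • r j` because the weights sum to one.
Hence `r (k + 1) = T (∑ α j • r j) + (quadratic terms)`, so that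
`‖r (k + 1)‖ ≤ γ ‖r k‖ + O(max ‖e j‖²)` (`anderson_step`). Contractivity makes errors and residuals
comparable, `(1 - γ) ‖e‖ ≤ ‖r‖ ≤ (1 + γ) ‖e‖`. By strong induction every residual in the window is
at most `γh ^ (k - min m k) * ‖r 0‖`, and for small `‖e 0‖` the quadratic terms fit into the slack
`(γh - γ) * γh ^ k * ‖r 0‖`.
-/

open Metric

/-- The linear part of `H` at the fixed point has norm at most `γ` and a quadratic remainder. -/
lemma exists_linearization {E : Type*} [NormedAddCommGroup E] [NormedSpace ℝ E]
    (H : E → E) (θs : E) (γ ρ Lr : ℝ) (r' : E → (E →L[ℝ] E))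
    (hfix : H θs = θs) (hγ : 0 ≤ γ) (hρ : 0 < ρ)
    (hcontr : ∀ a ∈ closedBall θs ρ, ∀ b ∈ closedBall θs ρ, ‖H a - H b‖ ≤ γ * ‖a - b‖)
    (hLr : 0 ≤ Lr)
    (hdiff : ∀ θ ∈ closedBall θs ρ,
      HasFDerivWithinAt (fun θ => H θ - θ) (r' θ) (closedBall θs ρ) θ)
    (hlip : ∀ a ∈ closedBall θs ρ, ∀ b ∈ closedBall θs ρ, ‖r' a - r' b‖ ≤ Lr * ‖a - b‖) :
    ∃ T : E →L[ℝ] E, ‖T‖ ≤ γ ∧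
      ∀ x ∈ closedBall θs ρ, ‖H x - θs - T (x - θs)‖ ≤ Lr * ‖x - θs‖ ^ 2 := by
  have hs : θs ∈ closedBall θs ρ := mem_closedBall_self hρ.le
  refine ⟨r' θs + ContinuousLinearMap.id ℝ E, ?_, ?_⟩
  · have h1 : HasFDerivAt (fun θ => H θ - θ) (r' θs) θs :=
      (hdiff θs hs).hasFDerivAt (closedBall_mem_nhds θs hρ)
    have h2 : HasFDerivAt H (r' θs + ContinuousLinearMap.id ℝ E) θs := by
      have h3 := h1.add (hasFDerivAt_id θs)
      refine h3.congr_of_eventuallyEq (Filter.Eventually.of_forall fun x => ?_)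
      simp
    refine h2.le_of_lip' hγ ?_
    filter_upwards [closedBall_mem_nhds θs hρ] with x hx
    exact hcontr x hx θs hs
  · intro x hx
    -- The mean value inequality is used on the smaller ball of radius `‖x - θs‖`, where the
    -- derivative deviates from its value at `θs` by at most `Lr * ‖x - θs‖`.
    have hsub : closedBall θs ‖x - θs‖ ⊆ closedBall θs ρ :=
      closedBall_subset_closedBall (mem_closedBall_iff_norm.1 hx)
    have h := (convex_closedBall θs ‖x - θs‖).norm_image_sub_le_of_norm_hasFDerivWithin_le'
      (f := fun θ => H θ - θ) (f' := r') (φ := r' θs) (C := Lr * ‖x - θs‖) (x := θs) (y := x)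
      (fun y hy => (hdiff y (hsub hy)).mono hsub)
      (fun y hy => (hlip y (hsub hy) θs hs).trans
        (mul_le_mul_of_nonneg_left (mem_closedBall_iff_norm.1 hy) hLr))
      (mem_closedBall_self (norm_nonneg _)) (mem_closedBall_iff_norm.2 le_rfl)
    have e : H x - θs - (r' θs + ContinuousLinearMap.id ℝ E) (x - θs)
        = (H x - x) - (H θs - θs) - r' θs (x - θs) := by
      simp only [hfix, add_apply, ContinuousLinearMap.id_apply]
      abel
    rw [e]
    calc _ ≤ Lr * ‖x - θs‖ * ‖x - θs‖ := h
      _ = _ := by ring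

lemma norm_sum_smul_le_of_forall_le {E ι : Type*} [NormedAddCommGroup E] [NormedSpace ℝ E]
    (s : Finset ι) (a : ι → ℝ) (v : ι → E) (M C : ℝ) (hC : 0 ≤ C)
    (ha : ∑ j ∈ s, |a j| ≤ M) (hv : ∀ j ∈ s, ‖v j‖ ≤ C) : ‖∑ j ∈ s, a j • v j‖ ≤ M * C := by
  calc ‖∑ j ∈ s, a j • v j‖ ≤ ∑ j ∈ s, |a j| * C := by
        refine norm_sum_le_of_le _ fun j hj => ?_
        rw [norm_smul, Real.norm_eq_abs]
        exact mul_le_mul_of_nonneg_left (hv j hj) (abs_nonneg _)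
    _ = (∑ j ∈ s, |a j|) * C := by rw [Finset.sum_mul]
    _ ≤ M * C := mul_le_mul_of_nonneg_right ha hC

/-- One Anderson step from points at distance at most `D` from `θs`: the error grows at most by the
factor `M`, and the new residual is `γ` times the weighted residual up to a quadratic term. -/
lemma anderson_step {E ι : Type*} [NormedAddCommGroup E] [NormedSpace ℝ E]
    (H : E → E) (θs : E) (γ ρ Lr M D : ℝ) (T : E →L[ℝ] E)
    (hγ1 : γ ≤ 1) (hLr : 0 ≤ Lr) (hM : 1 ≤ M) (hD : 0 ≤ D) (hMD : M * D ≤ ρ)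
    (hH : ∀ x ∈ closedBall θs ρ, ‖H x - θs‖ ≤ γ * ‖x - θs‖) (hT : ‖T‖ ≤ γ)
    (hquad : ∀ x ∈ closedBall θs ρ, ‖H x - θs - T (x - θs)‖ ≤ Lr * ‖x - θs‖ ^ 2)
    (s : Finset ι) (a : ι → ℝ) (x : ι → E) (y : E)
    (ha1 : ∑ j ∈ s, a j = 1) (ha : ∑ j ∈ s, |a j| ≤ M)
    (hx : ∀ j ∈ s, ‖x j - θs‖ ≤ D) (hy : y = ∑ j ∈ s, a j • H (x j)) :
    ‖y - θs‖ ≤ M * D ∧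
      ‖H y - y‖ ≤ γ * ‖∑ j ∈ s, a j • (H (x j) - x j)‖ + Lr * (M ^ 2 + M) * D ^ 2 := by
  have hDρ : D ≤ ρ := by nlinarith
  have hxb : ∀ j ∈ s, x j ∈ closedBall θs ρ := fun j hj =>
    mem_closedBall_iff_norm.2 ((hx j hj).trans hDρ)
  have hθ : ∑ j ∈ s, a j • θs = θs := by rw [← Finset.sum_smul, ha1, one_smul]
  have hyθ : y - θs = ∑ j ∈ s, a j • (H (x j) - θs) := by
    simp only [smul_sub, Finset.sum_sub_distrib, hθ, hy]
  have hye : ‖y - θs‖ ≤ M * D := by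
    rw [hyθ]
    refine norm_sum_smul_le_of_forall_le s a _ M D hD ha fun j hj => ?_
    have h1 := hH _ (hxb j hj)
    have h2 := hx j hj
    nlinarith [norm_nonneg (x j - θs)]
  refine ⟨hye, ?_⟩
  have hyb : y ∈ closedBall θs ρ := mem_closedBall_iff_norm.2 (hye.trans hMD)
  have hΔ : ‖∑ j ∈ s, a j • (H (x j) - θs - T (x j - θs))‖ ≤ M * (Lr * D ^ 2) := by
    refine norm_sum_smul_le_of_forall_le s a _ M _ (by positivity) ha fun j hj => ?_
    refine (hquad _ (hxb j hj)).trans ?_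
    gcongr
    exact hx j hj
  have hΔy : ‖H y - θs - T (y - θs)‖ ≤ Lr * (M * D) ^ 2 := by
    refine (hquad y hyb).trans ?_
    gcongr
  have key : H y - y = T (∑ j ∈ s, a j • (H (x j) - x j))
      + (H y - θs - T (y - θs)) - ∑ j ∈ s, a j • (H (x j) - θs - T (x j - θs)) := by
    have e1 : ∑ j ∈ s, a j • (H (x j) - θs - T (x j - θs))
        = (y - θs) - T (∑ j ∈ s, a j • (x j - θs)) := by
      rw [hyθ, map_sum, ← Finset.sum_sub_distrib]
      exact Finset.sum_congr rfl fun j _ => by rw [map_smul, ← smul_sub]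
    have e2 : ∑ j ∈ s, a j • (H (x j) - x j) = (y - θs) - ∑ j ∈ s, a j • (x j - θs) := by
      rw [hyθ, ← Finset.sum_sub_distrib]
      exact Finset.sum_congr rfl fun j _ => by rw [← smul_sub, sub_sub_sub_cancel_right]
    rw [e1, e2, map_sub]
    abel
  have hTr : ‖T (∑ j ∈ s, a j • (H (x j) - x j))‖ ≤ γ * ‖∑ j ∈ s, a j • (H (x j) - x j)‖ :=
    T.le_of_opNorm_le hT _
  rw [key]
  have h1 := norm_sub_le (T (∑ j ∈ s, a j • (H (x j) - x j)) + (H y - θs - T (y - θs)))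
    (∑ j ∈ s, a j • (H (x j) - θs - T (x j - θs)))
  have h2 := norm_add_le (T (∑ j ∈ s, a j • (H (x j) - x j))) (H y - θs - T (y - θs))
  nlinarith

/-- Local R-linear convergence of Anderson acceleration for a
contraction `H` with fixed point `θs`, whose residual `r θ = H θ - θ` has a
Lipschitz-continuous derivative on a closed ball around `θs`. -/
theorem anderson_acceleration_local_R_linear_convergence
    {d : ℕ} (H : EuclideanSpace ℝ (Fin d) → EuclideanSpace ℝ (Fin d))
    (θs : EuclideanSpace ℝ (Fin d)) (γ ρ Lr : ℝ) (m : ℕ) (Mα : ℝ)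
    (r' : EuclideanSpace ℝ (Fin d) →
      (EuclideanSpace ℝ (Fin d) →L[ℝ] EuclideanSpace ℝ (Fin d)))
    (hfix : H θs = θs) (hγ : γ ∈ Set.Ioo (0 : ℝ) 1) (hρ : 0 < ρ)
    (hcontr : ∀ a ∈ closedBall θs ρ, ∀ b ∈ closedBall θs ρ,
      ‖H a - H b‖ ≤ γ * ‖a - b‖)
    (hLr : 0 ≤ Lr)
    (hdiff : ∀ θ ∈ closedBall θs ρ,
      HasFDerivWithinAt (fun θ => H θ - θ) (r' θ) (closedBall θs ρ) θ)
    (hlip : ∀ a ∈ closedBall θs ρ, ∀ b ∈ closedBall θs ρ,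
      ‖r' a - r' b‖ ≤ Lr * ‖a - b‖)
    (hm : 1 ≤ m) (hMα : 1 ≤ Mα) :
    ∀ γh ∈ Set.Ioo γ 1, ∃ ρ₀ > 0,
      ∀ (θ : ℕ → EuclideanSpace ℝ (Fin d)) (α : ℕ → ℕ → ℝ),
        (∀ k, ∑ j ∈ Finset.range (min m k + 1), α k j = 1) →
        (∀ k, ∑ j ∈ Finset.range (min m k + 1), |α k j| ≤ Mα) →
        (∀ k, ‖∑ j ∈ Finset.range (min m k + 1),
            α k j • (H (θ (k - min m k + j)) - θ (k - min m k + j))‖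
          ≤ ‖H (θ k) - θ k‖) →
        (∀ k, θ (k + 1) =
          ∑ j ∈ Finset.range (min m k + 1), α k j • H (θ (k - min m k + j))) →
        ‖θ 0 - θs‖ ≤ ρ₀ →
        ∀ k, ‖H (θ k) - θ k‖ ≤ γh ^ k * ‖H (θ 0) - θ 0‖ ∧
          ‖θ k - θs‖ ≤ (1 + γ) / (1 - γ) * γh ^ k * ‖θ 0 - θs‖ := by
  obtain ⟨hγ0, hγ1⟩ := hγ
  rintro γh ⟨hγh, hγh1⟩
  have hγh0 : 0 < γh := hγ0.trans hγh
  have h1γ : 0 < 1 - γ := sub_pos.2 hγ1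
  obtain ⟨T, hT, hquad⟩ := exists_linearization H θs γ ρ Lr r' hfix hγ0.le hρ hcontr hLr hdiff hlip
  have hH : ∀ x ∈ closedBall θs ρ, ‖H x - θs‖ ≤ γ * ‖x - θs‖ := fun x hx => by
    simpa only [hfix] using hcontr x hx θs (mem_closedBall_self hρ.le)
  have hM0 : 0 < Mα := one_pos.trans_le hMα
  -- `B` bounds all errors: one step from the `B`-ball stays in the `ρ`-ball, and there the quadratic
  -- term fits into the slack `γh - γ`, with the loss `γh ^ m` due to the delay in the window.
  obtain ⟨B, hB, hBρ, hBs⟩ : ∃ B > 0, Mα * B ≤ ρ ∧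
      Lr * (Mα ^ 2 + Mα) * B ≤ (γh - γ) * (1 - γ) * γh ^ m := by
    have hA : 0 ≤ Lr * (Mα ^ 2 + Mα) := by positivity
    have hS : 0 < (γh - γ) * (1 - γ) * γh ^ m :=
      mul_pos (mul_pos (sub_pos.2 hγh) h1γ) (pow_pos hγh0 m)
    refine ⟨min (ρ / Mα) ((γh - γ) * (1 - γ) * γh ^ m / (Lr * (Mα ^ 2 + Mα) + 1)),
      lt_min (by positivity) (by positivity), ?_, ?_⟩
    · rw [mul_comm, ← le_div_iff₀ hM0]
      exact min_le_left _ _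
    · set S := (γh - γ) * (1 - γ) * γh ^ m
      set A := Lr * (Mα ^ 2 + Mα)
      have h1 : A * min (ρ / Mα) (S / (A + 1)) ≤ A * (S / (A + 1)) :=
        mul_le_mul_of_nonneg_left (min_le_right _ _) hA
      refine h1.trans ?_
      rw [← mul_div_assoc, div_le_iff₀ (by positivity)]
      nlinarith
  refine ⟨B * (1 - γ) / (1 + γ), by positivity, ?_⟩
  intro θ α hα1 hαM hres hupd h0
  have hBρ' : B ≤ ρ := by nlinarith
  -- Residuals control errors inside the `ρ`-ball.
  have herr : ∀ x ∈ closedBall θs ρ, (1 - γ) * ‖x - θs‖ ≤ ‖H x - x‖ := fun x hx => by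
    have h1 := hH x hx
    have h2 : ‖x - θs‖ ≤ ‖H x - x‖ + ‖H x - θs‖ := by
      rw [show x - θs = (H x - θs) - (H x - x) by abel, add_comm]
      exact norm_sub_le _ _
    linarith
  have h0B : (1 + γ) * ‖θ 0 - θs‖ ≤ B * (1 - γ) := by
    rw [le_div_iff₀ (by positivity)] at h0
    linarith
  have h0b : θ 0 ∈ closedBall θs ρ := by
    rw [mem_closedBall_iff_norm]
    nlinarith [norm_nonneg (θ 0 - θs)]
  set R := ‖H (θ 0) - θ 0‖ with hR
  have hR0 : 0 ≤ R := norm_nonneg _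
  have hRe : R ≤ (1 + γ) * ‖θ 0 - θs‖ := by
    have h1 := hH _ h0b
    have h2 : R ≤ ‖H (θ 0) - θs‖ + ‖θ 0 - θs‖ := by
      rw [hR, show H (θ 0) - θ 0 = (H (θ 0) - θs) - (θ 0 - θs) by abel]
      exact norm_sub_le _ _
    linarith
  have main : ∀ k, θ k ∈ closedBall θs ρ ∧ ‖H (θ k) - θ k‖ ≤ γh ^ k * R := by
    intro k
    induction k using Nat.strong_induction_on with
    | _ k ih =>
      rcases k with _ | k
      · exact ⟨h0b, by simp [hR]⟩
      set q := γh ^ (k - min m k) with hq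
      have hq0 : 0 < q := pow_pos hγh0 _
      have hq1 : q ≤ 1 := pow_le_one₀ hγh0.le hγh1.le
      have hqm : q * γh ^ m ≤ γh ^ k := by
        rw [hq, ← pow_add]
        exact pow_le_pow_of_le_one hγh0.le hγh1.le (by omega)
      set D := R / (1 - γ) with hD
      have hDR : D * (1 - γ) = R := div_mul_cancel₀ _ h1γ.ne'
      have hD0 : 0 ≤ D := div_nonneg hR0 h1γ.le
      have hDB : D ≤ B := by
        rw [hD, div_le_iff₀ h1γ]
        exact hRe.trans h0B
      have hqD : q * D ≤ D := mul_le_of_le_one_left hD0 hq1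
      have hx : ∀ j ∈ Finset.range (min m k + 1), ‖θ (k - min m k + j) - θs‖ ≤ q * D := by
        intro j hj
        have hjk := Finset.mem_range.1 hj
        obtain ⟨hb, hr⟩ := ih (k - min m k + j) (by omega)
        have h1 := herr _ hb
        have h2 : γh ^ (k - min m k + j) ≤ q :=
          pow_le_pow_of_le_one hγh0.le hγh1.le (by omega)
        have h3 : γh ^ (k - min m k + j) * R ≤ q * R := mul_le_mul_of_nonneg_right h2 hR0
        rw [hD, ← mul_div_assoc, le_div_iff₀ h1γ]
        linarith
      have hMD : Mα * (q * D) ≤ ρ :=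
        (mul_le_mul_of_nonneg_left (hqD.trans hDB) hM0.le).trans hBρ
      obtain ⟨hs1, hs2⟩ := anderson_step H θs γ ρ Lr Mα (q * D) T hγ1.le hLr hMα (by positivity) hMD
        hH hT hquad _ (α k) (fun j => θ (k - min m k + j)) (θ (k + 1)) (hα1 k) (hαM k) hx (hupd k)
      refine ⟨mem_closedBall_iff_norm.2 (hs1.trans hMD), hs2.trans ?_⟩
      have hlin : γ * ‖∑ j ∈ Finset.range (min m k + 1),
          α k j • (H (θ (k - min m k + j)) - θ (k - min m k + j))‖ ≤ γ * (γh ^ k * R) :=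
        mul_le_mul_of_nonneg_left ((hres k).trans (ih k (by omega)).2) hγ0.le
      have hsq : Lr * (Mα ^ 2 + Mα) * (q * D) ^ 2 ≤ (γh - γ) * (γh ^ k * R) :=
        calc Lr * (Mα ^ 2 + Mα) * (q * D) ^ 2
            = (q * D) * (Lr * (Mα ^ 2 + Mα) * (q * D)) := by ring
          _ ≤ (q * D) * (Lr * (Mα ^ 2 + Mα) * B) := by
              gcongr
              exact hqD.trans hDB
          _ ≤ (q * D) * ((γh - γ) * (1 - γ) * γh ^ m) := by gcongr
          _ = (γh - γ) * ((q * γh ^ m) * (D * (1 - γ))) := by ring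
          _ = (γh - γ) * ((q * γh ^ m) * R) := by rw [hDR]
          _ ≤ (γh - γ) * (γh ^ k * R) := mul_le_mul_of_nonneg_left
              (mul_le_mul_of_nonneg_right hqm hR0) (sub_pos.2 hγh).le
      calc _ ≤ γ * (γh ^ k * R) + (γh - γ) * (γh ^ k * R) := add_le_add hlin hsq
        _ = γh ^ (k + 1) * R := by ring
  intro k
  obtain ⟨hb, hr⟩ := main k
  refine ⟨hr, ?_⟩
  have h1 := herr _ hb
  have h2 : γh ^ k * R ≤ γh ^ k * ((1 + γ) * ‖θ 0 - θs‖) :=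
    mul_le_mul_of_nonneg_left hRe (pow_pos hγh0 k).le
  rw [show (1 + γ) / (1 - γ) * γh ^ k * ‖θ 0 - θs‖
    = γh ^ k * ((1 + γ) * ‖θ 0 - θs‖) / (1 - γ) by ring, le_div_iff₀ h1γ]
  linarith
end

section
/- Let f : ℝⁿ → ℝ be continuously differentiable, λ > 0, and let φ : [0,∞) → [0,∞) be differentiable on (0,∞) with φ' continuous and positive on (0,∞). Define the optimality measure χ(x, ε) = max_{i=1,...,n} dist(−∇_i f(x), λ φ'(|x_i| + ε_i) ∂|x_i|), where ∂|t| = {sign(t)} if t ≠ 0 and ∂|t| = [−1, 1] if t = 0. Suppose (x^k) ⊂ ℝⁿ and (ε^k) ⊂ ℝⁿ with all ε^k_i > 0 satisfy x^k → x*, ε^k → 0, and χ(x^k, ε^k) → 0. Then for every index i with x*_i ≠ 0 it holds that ∇_i f(x*) + λ φ'(|x*_i|) sign(x*_i) = 0; i.e., x* satisfies the first-order necessary optimality condition on its support. -/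
/-!
If `xs i ≠ 0`, then eventually `x k i ≠ 0` has the sign of `xs i`, so `∂|x k i|` is the singleton
`{sign (xs i)}` and `χ(x k, ε k)` dominates
`|∇_i f (x k) + lam * φ' (|x k i| + ε k i) * sign (xs i)|`. By continuity of `∇f`, and of `φ'` at
`|xs i| > 0`, this residual tends to the one at `xs`; being squeezed by `χ → 0`, it also tends
to `0`.
-/

open Filter Topology

/-- The subdifferential of the absolute value on `ℝ`:
`{sign t}` if `t ≠ 0` and `[-1, 1]` if `t = 0`. -/
noncomputable def absSubdiff (t : ℝ) : Set ℝ :=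
  if t = 0 then Set.Icc (-1 : ℝ) 1 else {Real.sign t}

/-- The optimality measure
`χ(x, ε) = max_i dist(−∇_i f x, λ φ'(|x_i| + ε_i) ∂|x_i|)`,
where `g = ∇f x` and `dφ = φ'`. -/
noncomputable def optMeasure {n : ℕ} (lam : ℝ) (dφ : ℝ → ℝ)
    (g x ε : EuclideanSpace ℝ (Fin n)) : ℝ :=
  ⨆ i, Metric.infDist (-(g i))
    ((fun ξ => lam * dφ (|x i| + ε i) * ξ) '' absSubdiff (x i))

/-- Off the kink of `|·|` the subdifferential is a singleton, so each distance entering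
`optMeasure` is an honest stationarity residual, and the measure dominates it. -/
lemma abs_residual_le_optMeasure {n : ℕ} (lam : ℝ) (dφ : ℝ → ℝ)
    (g x ε : EuclideanSpace ℝ (Fin n)) (i : Fin n) (hi : x i ≠ 0) :
    |g i + lam * dφ (|x i| + ε i) * Real.sign (x i)| ≤ optMeasure lam dφ g x ε := by
  have hdist : Metric.infDist (-(g i))
      ((fun ξ => lam * dφ (|x i| + ε i) * ξ) '' absSubdiff (x i))
      = |g i + lam * dφ (|x i| + ε i) * Real.sign (x i)| := by
    rw [absSubdiff, if_neg hi, Set.image_singleton, Metric.infDist_singleton, Real.dist_eq,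
      ← abs_neg]
    congr 1
    ring
  rw [← hdist]
  exact le_ciSup (f := fun j => Metric.infDist (-(g j))
    ((fun ξ => lam * dφ (|x j| + ε j) * ξ) '' absSubdiff (x j)))
    (Set.finite_range _).bddAbove i

lemma eventually_ne_zero_and_sign_eq {u : ℕ → ℝ} {a : ℝ} (hu : Tendsto u atTop (𝓝 a))
    (ha : a ≠ 0) : ∀ᶠ k in atTop, u k ≠ 0 ∧ Real.sign (u k) = Real.sign a := by
  rcases lt_or_gt_of_ne ha with h | h
  · filter_upwards [hu.eventually_lt_const h] with k hk
    exact ⟨hk.ne, by rw [Real.sign_of_neg hk, Real.sign_of_neg h]⟩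
  · filter_upwards [hu.eventually_const_lt h] with k hk
    exact ⟨hk.ne', by rw [Real.sign_of_pos hk, Real.sign_of_pos h]⟩

/-- If `x^k → x*`, `ε^k → 0` (componentwise positive) and the
optimality measure `χ(x^k, ε^k) → 0`, then `x*` satisfies the first-order
necessary optimality condition on its support. -/
theorem limit_of_optMeasure_is_stationary_on_support
    {n : ℕ} (f : EuclideanSpace ℝ (Fin n) → ℝ)
    (f' : EuclideanSpace ℝ (Fin n) → EuclideanSpace ℝ (Fin n))
    (lam : ℝ) (φ dφ : ℝ → ℝ)
    (hgrad : ∀ x, HasGradientAt f (f' x) x) (hf'cont : Continuous f')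
    (hlam : 0 < lam)
    (hφmap : ∀ t, 0 ≤ t → 0 ≤ φ t)
    (hφd : ∀ t, 0 < t → HasDerivAt φ (dφ t) t)
    (hdφcont : ContinuousOn dφ (Set.Ioi 0))
    (hdφpos : ∀ t, 0 < t → 0 < dφ t)
    (x ε : ℕ → EuclideanSpace ℝ (Fin n))
    (xs : EuclideanSpace ℝ (Fin n))
    (hε : ∀ k i, 0 < ε k i)
    (hx : Tendsto x atTop (𝓝 xs))
    (hεlim : Tendsto ε atTop (𝓝 0))
    (hχ : Tendsto (fun k => optMeasure lam dφ (f' (x k)) (x k) (ε k))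
      atTop (𝓝 0)) :
    ∀ i, xs i ≠ 0 → f' xs i + lam * dφ |xs i| * Real.sign (xs i) = 0 := by
  intro i hi
  have hxi : Tendsto (fun k => x k i) atTop (𝓝 (xs i)) :=
    ((EuclideanSpace.proj (𝕜 := ℝ) i).continuous.tendsto xs).comp hx
  have hεi : Tendsto (fun k => ε k i) atTop (𝓝 0) :=
    ((EuclideanSpace.proj (𝕜 := ℝ) i).continuous.tendsto 0).comp hεlim
  have hgi : Tendsto (fun k => f' (x k) i) atTop (𝓝 (f' xs i)) :=
    (((EuclideanSpace.proj (𝕜 := ℝ) i).continuous.comp hf'cont).tendsto xs).comp hx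
  have harg : Tendsto (fun k => |x k i| + ε k i) atTop (𝓝 |xs i|) := by
    simpa using hxi.abs.add hεi
  have hdφ : Tendsto (fun k => dφ (|x k i| + ε k i)) atTop (𝓝 (dφ |xs i|)) :=
    (hdφcont.continuousAt (Ioi_mem_nhds (abs_pos.mpr hi))).tendsto.comp harg
  have hlim := hgi.add ((hdφ.const_mul lam).mul_const (Real.sign (xs i)))
  refine tendsto_nhds_unique hlim (squeeze_zero_norm' ?_ hχ)
  filter_upwards [eventually_ne_zero_and_sign_eq hxi hi] with k hk
  rw [Real.norm_eq_abs, ← hk.2]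
  exact abs_residual_le_optMeasure lam dφ (f' (x k)) (x k) (ε k) i hk.1
end

section
/- Let f : ℝⁿ → ℝ be differentiable with L_f-Lipschitz gradient (L_f > 0), λ > 0, and let φ : [0,∞) → [0,∞) satisfy φ(0) = 0 and be differentiable, concave, and strictly increasing on (0,∞). Fix L > L_f/2, x⁰ ∈ ℝⁿ, ε⁰ ∈ ℝⁿ with ε⁰_i > 0, and μ ∈ (0,1]. Set ω_i = φ'(|x⁰_i| + ε⁰_i), let x⁺ be a global minimizer of G(x) = ∇f(x⁰)ᵀx + (L/2)‖x − x⁰‖² + λ Σ_{i=1}^n ω_i |x_i|, and set ε⁺ = μ ε⁰. Then F(x⁰, ε⁰) − F(x⁺, ε⁺) ≥ (L − L_f/2) ‖x⁰ − x⁺‖², where F(x, ε) = f(x) + λ Σ_{i=1}^n φ(|x_i| + ε_i). In particular the relaxed objective F decreases monotonically along IRL1 iterates. -/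
/-!
The step adds up three inequalities. The model `G` is `L`-strongly convex, so its minimizer satisfies
`G x⁺ + (L/2)‖x⁰ - x⁺‖² ≤ G x⁰`; the descent inequality bounds `f x⁺` by its linearization at
`x⁰` plus `(L_f/2)‖x⁰ - x⁺‖²`; and concavity puts `φ` below its tangent at `|x⁰_i| + ε⁰_i`, whose
slope is the weight `ω_i`. Shrinking the perturbation only helps since `φ` is increasing.
-/

open scoped RealInnerProductSpace

/-- A concave function on `(0, ∞)` lies below its tangents. -/
theorem concave_le_tangent {φ : ℝ → ℝ} {m a b : ℝ} (hconc : ConcaveOn ℝ (Set.Ioi 0) φ)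
    (ha : 0 < a) (hb : 0 < b) (hd : HasDerivAt φ m a) : φ b ≤ φ a + m * (b - a) := by
  rcases lt_trichotomy a b with h | h | h
  · have := hconc.slope_le_of_hasDerivAt ha hb h hd
    rw [slope_def_field, div_le_iff₀ (sub_pos.2 h)] at this
    linarith
  · subst h; simp
  · have := hconc.le_slope_of_hasDerivAt hb ha h hd
    rw [slope_def_field, le_div_iff₀ (sub_pos.2 h)] at this
    linarith

/-- The gap at a minimizer `xp` of the proximal model with center `x0`. The model value at `x0`
exceeds the minimum by at least `(L/2)‖x0 - xp‖²`; the second half of `L * ‖x0 - xp‖²` is the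
quadratic term of the model at `xp`. -/
theorem prox_model_gap {n : ℕ} (g x0 xp : EuclideanSpace ℝ (Fin n)) (L lam : ℝ) (w : Fin n → ℝ)
    (hlam : 0 ≤ lam) (hw : ∀ i, 0 ≤ w i)
    (hmin : ∀ y : EuclideanSpace ℝ (Fin n),
      ⟪g, xp⟫ + L / 2 * ‖xp - x0‖ ^ 2 + lam * ∑ i, w i * |xp i|
        ≤ ⟪g, y⟫ + L / 2 * ‖y - x0‖ ^ 2 + lam * ∑ i, w i * |y i|) :
    L * ‖x0 - xp‖ ^ 2 ≤
      ⟪g, x0 - xp⟫ + lam * (∑ i, w i * |x0 i| - ∑ i, w i * |xp i|) := by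
  set D := ‖x0 - xp‖ ^ 2 with hD
  -- Compare `xp` with the point at parameter `t` on the segment to `x0`, and divide by `t`.
  have key : ∀ t : ℝ, 0 < t → t ≤ 1 →
      L * D ≤ ⟪g, x0 - xp⟫ + lam * (∑ i, w i * |x0 i| - ∑ i, w i * |xp i|) + t * (L / 2 * D) := by
    intro t ht ht1
    have h := hmin (xp + t • (x0 - xp))
    have hn : ‖xp + t • (x0 - xp) - x0‖ ^ 2 = (1 - t) ^ 2 * D := by
      have : xp + t • (x0 - xp) - x0 = (-(1 - t)) • (x0 - xp) := by module
      rw [this, norm_smul, mul_pow, Real.norm_eq_abs, sq_abs, neg_sq]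
    have hs : ∑ i, w i * |(xp + t • (x0 - xp)) i| ≤
        (1 - t) * ∑ i, w i * |xp i| + t * ∑ i, w i * |x0 i| := by
      rw [Finset.mul_sum, Finset.mul_sum, ← Finset.sum_add_distrib]
      refine Finset.sum_le_sum fun i _ => ?_
      have h1 : |(xp + t • (x0 - xp)) i| ≤ (1 - t) * |xp i| + t * |x0 i| := by
        have e : (xp + t • (x0 - xp)) i = (1 - t) * xp i + t * x0 i := by
          simp only [PiLp.add_apply, PiLp.smul_apply, PiLp.sub_apply, smul_eq_mul]
          ring
        rw [e]
        refine (abs_add_le _ _).trans_eq ?_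
        rw [abs_mul, abs_mul, abs_of_nonneg (sub_nonneg.2 ht1), abs_of_pos ht]
      linarith [mul_le_mul_of_nonneg_left h1 (hw i)]
    have hs' := mul_le_mul_of_nonneg_left hs hlam
    rw [hn, norm_sub_rev xp x0, ← hD, inner_add_right, inner_smul_right] at h
    refine le_of_mul_le_mul_left ?_ ht
    linarith
  -- Let `t → 0⁺`.
  have hlim : Filter.Tendsto (fun t : ℝ =>
      ⟪g, x0 - xp⟫ + lam * (∑ i, w i * |x0 i| - ∑ i, w i * |xp i|) + t * (L / 2 * D))
      (nhdsWithin 0 (Set.Ioi 0))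
      (nhds (⟪g, x0 - xp⟫ + lam * (∑ i, w i * |x0 i| - ∑ i, w i * |xp i|) + 0 * (L / 2 * D))) :=
    (Continuous.tendsto (by fun_prop) 0).mono_left nhdsWithin_le_nhds
  rw [zero_mul, add_zero] at hlim
  refine ge_of_tendsto hlim ?_
  filter_upwards [Ioc_mem_nhdsGT (zero_lt_one' ℝ)] with t ht
  exact key t ht.1 ht.2

/-- One IRL1 step decreases the relaxed objective
`F(x, ε) = f x + λ Σ_i φ(|x_i| + ε_i)` by at least `(L - L_f/2)‖x⁰ - x⁺‖²`. -/
theorem irl1_step_sufficient_decrease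
    {n : ℕ} (f : EuclideanSpace ℝ (Fin n) → ℝ)
    (f' : EuclideanSpace ℝ (Fin n) → EuclideanSpace ℝ (Fin n))
    (Lf lam L μ : ℝ) (φ dφ : ℝ → ℝ)
    (hLf : 0 < Lf)
    (hgrad : ∀ x, HasGradientAt f (f' x) x)
    (hlip : ∀ x y, f x - f y ≤ ⟪f' y, x - y⟫ + Lf / 2 * ‖x - y‖ ^ 2)
    (hlam : 0 < lam) (hL : Lf / 2 < L) (hμ : μ ∈ Set.Ioc (0 : ℝ) 1)
    (hφ0 : φ 0 = 0)
    (hφmap : ∀ t, 0 ≤ t → 0 ≤ φ t)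
    (hφd : ∀ t, 0 < t → HasDerivAt φ (dφ t) t)
    (hconc : ConcaveOn ℝ (Set.Ioi 0) φ)
    (hmono : StrictMonoOn φ (Set.Ioi 0))
    (x0 xp : EuclideanSpace ℝ (Fin n)) (ε0 : Fin n → ℝ)
    (hε0 : ∀ i, 0 < ε0 i)
    (hmin : ∀ y : EuclideanSpace ℝ (Fin n),
      ⟪f' x0, xp⟫ + L / 2 * ‖xp - x0‖ ^ 2
          + lam * ∑ i, dφ (|x0 i| + ε0 i) * |xp i|
        ≤ ⟪f' x0, y⟫ + L / 2 * ‖y - x0‖ ^ 2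
          + lam * ∑ i, dφ (|x0 i| + ε0 i) * |y i|) :
    (f x0 + lam * ∑ i, φ (|x0 i| + ε0 i))
        - (f xp + lam * ∑ i, φ (|xp i| + μ * ε0 i))
      ≥ (L - Lf / 2) * ‖x0 - xp‖ ^ 2 := by
  have ha : ∀ i, 0 < |x0 i| + ε0 i := fun i => add_pos_of_nonneg_of_pos (abs_nonneg _) (hε0 i)
  have hw : ∀ i, 0 ≤ dφ (|x0 i| + ε0 i) := by
    intro i
    -- The tangent at `a` lies above `φ (a + 1) > φ a`, so its slope is positive.
    have hb : 0 < |x0 i| + ε0 i + 1 := add_pos (ha i) one_pos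
    have h1 := concave_le_tangent hconc (ha i) hb (hφd _ (ha i))
    have h2 := hmono (ha i) hb (lt_add_one _)
    linarith
  have hgap := prox_model_gap (f' x0) x0 xp L lam _ hlam.le hw hmin
  have hdesc := hlip xp x0
  rw [norm_sub_rev xp x0, ← neg_sub x0 xp, inner_neg_right] at hdesc
  have hpen : ∑ i, φ (|xp i| + μ * ε0 i) ≤ ∑ i, φ (|x0 i| + ε0 i) +
      (∑ i, dφ (|x0 i| + ε0 i) * |xp i| - ∑ i, dφ (|x0 i| + ε0 i) * |x0 i|) := by
    rw [← Finset.sum_sub_distrib, ← Finset.sum_add_distrib]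
    refine Finset.sum_le_sum fun i _ => ?_
    have hp : 0 < |xp i| + μ * ε0 i :=
      add_pos_of_nonneg_of_pos (abs_nonneg _) (mul_pos hμ.1 (hε0 i))
    have hb : 0 < |xp i| + ε0 i := add_pos_of_nonneg_of_pos (abs_nonneg _) (hε0 i)
    have h1 : φ (|xp i| + μ * ε0 i) ≤ φ (|xp i| + ε0 i) :=
      hmono.monotoneOn hp hb (by linarith [mul_le_of_le_one_left (hε0 i).le hμ.2])
    have h2 := concave_le_tangent hconc (ha i) hb (hφd _ (ha i))
    linarith
  have hpen' := mul_le_mul_of_nonneg_left hpen hlam.le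
  linarith
end

section
/- Let f : ℝⁿ → ℝ be differentiable with L_f-Lipschitz gradient and bounded below, λ > 0, L > L_f/2, μ ∈ (0,1), and let φ : [0,∞) → [0,∞) satisfy φ(0) = 0 and be differentiable, concave, and strictly increasing on (0,∞). Let (x^k, ε^k) be IRL1 iterates: ε⁰ has all positive entries, ε^{k+1} = μ ε^k, and x^{k+1} is a global minimizer of G(x; x^k, ε^k) = ∇f(x^k)ᵀx + (L/2)‖x − x^k‖² + λ Σ_i φ'(|x^k_i| + ε^k_i)|x_i|. Then the sequence F(x^k, ε^k) = f(x^k) + λ Σ_i φ(|x^k_i| + ε^k_i) is nonincreasing, the series Σ_{k=0}^∞ ‖x^{k+1} − x^k‖² converges with Σ_{k=0}^∞ (L − L_f/2)‖x^{k+1} − x^k‖² ≤ F(x⁰, ε⁰) − inf_k F(x^k, ε^k), and ‖x^{k+1} − x^k‖ → 0. -/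
/-!
Each step decreases the objective `F` by at least `(L - Lf/2) ‖x (k+1) - x k‖²`; the rest is
telescoping. Merely comparing the value of the convex model `G` at `x (k+1)` and at `x k` would give
only the constant `(L - Lf)/2`. The full constant comes from the `L`-strong convexity of `G`:
its minimizer `p` satisfies `G p + (L/2) ‖q - p‖² ≤ G q` for every `q`, and `q = x k` supplies the
missing `L/2` (`model_decrease`). Concavity of `φ` bounds the change in the regularizer by the change
in its weighted `ℓ¹` linearization (`concave_tangent`), monotonicity of `φ` absorbs the shrinking
of `ε`, and the descent inequality for `f` contributes the `Lf/2` term.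
-/

open Filter Topology
open scoped RealInnerProductSpace

theorem concave_tangent {φ : ℝ → ℝ} {d a b : ℝ} (hc : ConcaveOn ℝ (Set.Ioi 0) φ)
    (hd : HasDerivAt φ d a) (ha : 0 < a) (hb : 0 < b) : φ b ≤ φ a + d * (b - a) := by
  rcases lt_trichotomy a b with h | h | h
  · have h1 := hc.slope_le_of_hasDerivAt ha hb h hd
    rw [slope_def_field, div_le_iff₀ (by linarith)] at h1
    linarith
  · subst h
    simp
  · have h1 := hc.le_slope_of_hasDerivAt hb ha h hd
    rw [slope_def_field, le_div_iff₀ (by linarith)] at h1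
    linarith

theorem nonpos_of_forall_le_mul {a c : ℝ} (hc : 0 ≤ c)
    (h : ∀ t : ℝ, 0 < t → t ≤ 1 → a ≤ c * t) : a ≤ 0 := by
  by_contra! ha
  have h1 := h (a / (a + c)) (by positivity) (by rw [div_le_one (by positivity)]; linarith)
  rw [← mul_div_assoc, le_div_iff₀ (by positivity)] at h1
  nlinarith

/-- Decrease of the strongly convex model at its minimizer `p`, compared with its centre `q`: the
constant is `L` rather than the `L / 2` obtained from minimality alone, since the model is
compared at points of the segment from `p` to `q` close to `p`. -/
theorem model_decrease {n : ℕ} (g p q : EuclideanSpace ℝ (Fin n)) (L lam : ℝ) (w : Fin n → ℝ)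
    (hL : 0 ≤ L) (hlam : 0 ≤ lam) (hw : ∀ i, 0 ≤ w i)
    (hmin : ∀ y : EuclideanSpace ℝ (Fin n),
      ⟪g, p⟫ + L / 2 * ‖p - q‖ ^ 2 + lam * ∑ i, w i * |p i|
        ≤ ⟪g, y⟫ + L / 2 * ‖y - q‖ ^ 2 + lam * ∑ i, w i * |y i|) :
    ⟪g, p - q⟫ + lam * (∑ i, w i * |p i| - ∑ i, w i * |q i|) + L * ‖p - q‖ ^ 2 ≤ 0 := by
  refine nonpos_of_forall_le_mul (c := L / 2 * ‖p - q‖ ^ 2) (by positivity) fun t ht0 ht1 => ?_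
  have h := hmin (p - t • (p - q))
  have hn : ‖p - t • (p - q) - q‖ ^ 2 = (1 - t) ^ 2 * ‖p - q‖ ^ 2 := by
    have : p - t • (p - q) - q = (1 - t) • (p - q) := by module
    rw [this, norm_smul, mul_pow, Real.norm_eq_abs, sq_abs]
  have hs : ∑ i, w i * |(p - t • (p - q)) i|
      ≤ (1 - t) * ∑ i, w i * |p i| + t * ∑ i, w i * |q i| := by
    rw [Finset.mul_sum, Finset.mul_sum, ← Finset.sum_add_distrib]
    refine Finset.sum_le_sum fun i _ => ?_
    have e : (p - t • (p - q)) i = (1 - t) * p i + t * q i := by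
      simp only [PiLp.sub_apply, PiLp.smul_apply, smul_eq_mul]
      ring
    have h1 : |(1 - t) * p i + t * q i| ≤ (1 - t) * |p i| + t * |q i| := by
      refine (abs_add_le _ _).trans_eq ?_
      rw [abs_mul, abs_mul, abs_of_nonneg (sub_nonneg.2 ht1), abs_of_pos ht0]
    rw [e]
    exact (mul_le_mul_of_nonneg_left h1 (hw i)).trans_eq (by ring)
  rw [hn, inner_sub_right, real_inner_smul_right] at h
  have hs' := mul_le_mul_of_nonneg_left hs hlam
  -- All terms left after cancellation are multiples of `t`.
  refine le_of_mul_le_mul_left ?_ ht0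
  linear_combination h + hs'

theorem sum_range_le_of_decrease {F a : ℕ → ℝ} {m : ℝ} (h : ∀ k, F (k + 1) + a k ≤ F k)
    (hm : ∀ k, m ≤ F k) (N : ℕ) : ∑ k ∈ Finset.range N, a k ≤ F 0 - m := by
  have : ∑ k ∈ Finset.range N, a k ≤ F 0 - F N := by
    rw [← Finset.sum_range_sub']
    exact Finset.sum_le_sum fun k _ => by linarith [h k]
  linarith [hm N]

/-- Along IRL1 iterates the relaxed objective
`F(x^k, ε^k) = f(x^k) + λ Σ_i φ(|x^k_i| + ε^k_i)` is nonincreasing, the series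
`Σ_k ‖x^{k+1} - x^k‖²` converges with
`Σ_k (L - L_f/2)‖x^{k+1} - x^k‖² ≤ F(x⁰, ε⁰) - inf_k F(x^k, ε^k)`,
and `‖x^{k+1} - x^k‖ → 0`. -/
theorem irl1_objective_monotone_and_successive_differences_summable
    {n : ℕ} (f : EuclideanSpace ℝ (Fin n) → ℝ)
    (f' : EuclideanSpace ℝ (Fin n) → EuclideanSpace ℝ (Fin n))
    (Lf lam L μ : ℝ) (φ dφ : ℝ → ℝ) (B : ℝ)
    (hLf : 0 < Lf)
    (hgrad : ∀ x, HasGradientAt f (f' x) x)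
    (hlip : ∀ x y, f x - f y ≤ ⟪f' y, x - y⟫ + Lf / 2 * ‖x - y‖ ^ 2)
    (hbdd : ∀ x, B ≤ f x)
    (hlam : 0 < lam) (hL : Lf / 2 < L) (hμ : μ ∈ Set.Ioo (0 : ℝ) 1)
    (hφ0 : φ 0 = 0)
    (hφmap : ∀ t, 0 ≤ t → 0 ≤ φ t)
    (hφd : ∀ t, 0 < t → HasDerivAt φ (dφ t) t)
    (hconc : ConcaveOn ℝ (Set.Ioi 0) φ)
    (hmono : StrictMonoOn φ (Set.Ioi 0))
    (x : ℕ → EuclideanSpace ℝ (Fin n)) (ε : ℕ → Fin n → ℝ)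
    (hε0 : ∀ i, 0 < ε 0 i)
    (hεrec : ∀ k i, ε (k + 1) i = μ * ε k i)
    (hmin : ∀ k, ∀ y : EuclideanSpace ℝ (Fin n),
      ⟪f' (x k), x (k + 1)⟫ + L / 2 * ‖x (k + 1) - x k‖ ^ 2
          + lam * ∑ i, dφ (|x k i| + ε k i) * |x (k + 1) i|
        ≤ ⟪f' (x k), y⟫ + L / 2 * ‖y - x k‖ ^ 2
          + lam * ∑ i, dφ (|x k i| + ε k i) * |y i|) :
    Antitone (fun k => f (x k) + lam * ∑ i, φ (|x k i| + ε k i)) ∧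
    Summable (fun k => ‖x (k + 1) - x k‖ ^ 2) ∧
    ((∑' k, (L - Lf / 2) * ‖x (k + 1) - x k‖ ^ 2)
      ≤ (f (x 0) + lam * ∑ i, φ (|x 0 i| + ε 0 i))
        - (⨅ k, (f (x k) + lam * ∑ i, φ (|x k i| + ε k i)))) ∧
    Tendsto (fun k => ‖x (k + 1) - x k‖) atTop (𝓝 0) := by
  have hε : ∀ k i, 0 < ε k i := by
    intro k i
    induction k with
    | zero => exact hε0 i
    | succ k ih => rw [hεrec]; exact mul_pos hμ.1 ih
  have harg : ∀ k i, 0 < |x k i| + ε k i := fun k i => by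
    linarith [abs_nonneg (x k i), hε k i]
  -- The tangent line at `t` lies above `φ (t + 1) > φ t`, so the weights are nonnegative.
  have hdφ : ∀ t, 0 < t → 0 ≤ dφ t := by
    intro t ht
    have ht1 : 0 < t + 1 := by linarith
    have h1 := concave_tangent hconc (hφd t ht) ht ht1
    have h2 := hmono ht ht1 (by linarith)
    linarith
  set F : ℕ → ℝ := fun k => f (x k) + lam * ∑ i, φ (|x k i| + ε k i) with hF
  have hdec : ∀ k, F (k + 1) + (L - Lf / 2) * ‖x (k + 1) - x k‖ ^ 2 ≤ F k := by
    intro k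
    have hmodel := model_decrease (f' (x k)) (x (k + 1)) (x k) L lam
      (fun i => dφ (|x k i| + ε k i)) (by linarith) hlam.le (fun i => hdφ _ (harg k i)) (hmin k)
    have hsum : ∑ i, φ (|x (k + 1) i| + ε (k + 1) i) ≤ ∑ i, φ (|x k i| + ε k i)
        + (∑ i, dφ (|x k i| + ε k i) * |x (k + 1) i| - ∑ i, dφ (|x k i| + ε k i) * |x k i|) := by
      rw [← Finset.sum_sub_distrib, ← Finset.sum_add_distrib]
      refine Finset.sum_le_sum fun i _ => ?_
      have hb : 0 < |x (k + 1) i| + ε k i := by linarith [abs_nonneg (x (k + 1) i), hε k i]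
      have hle : ε (k + 1) i ≤ ε k i := by
        rw [hεrec]
        exact mul_le_of_le_one_left (hε k i).le hμ.2.le
      have h1 := hmono.monotoneOn (harg (k + 1) i) hb (by linarith)
      have h2 := concave_tangent hconc (hφd _ (harg k i)) (harg k i) hb
      linear_combination h1 + h2
    have hl := hlip (x (k + 1)) (x k)
    have hsum' := mul_le_mul_of_nonneg_left hsum hlam.le
    simp only [hF]
    linear_combination hmodel + hl + hsum'
  have hpos : 0 < L - Lf / 2 := by linarith
  have hterm : ∀ k, 0 ≤ (L - Lf / 2) * ‖x (k + 1) - x k‖ ^ 2 := fun k => by positivity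
  have hFB : ∀ k, B ≤ F k := fun k => by
    have h1 : 0 ≤ ∑ i, φ (|x k i| + ε k i) :=
      Finset.sum_nonneg fun i _ => hφmap _ (harg k i).le
    have h2 := mul_nonneg hlam.le h1
    simp only [hF]
    linarith [hbdd (x k)]
  have hBdd : BddBelow (Set.range F) := ⟨B, by rintro _ ⟨k, rfl⟩; exact hFB k⟩
  have hpart := sum_range_le_of_decrease hdec fun k => ciInf_le hBdd k
  have hsq : Summable fun k => ‖x (k + 1) - x k‖ ^ 2 :=
    (summable_mul_left_iff hpos.ne').1 (summable_of_sum_range_le hterm hpart)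
  refine ⟨antitone_nat_of_succ_le fun k => by linarith [hdec k, hterm k], hsq,
    Real.tsum_le_of_sum_range_le hterm hpart, ?_⟩
  have h0 := (Real.continuous_sqrt.tendsto 0).comp hsq.tendsto_atTop_zero
  simpa [Function.comp_def, Real.sqrt_sq (norm_nonneg _)] using h0
end

section
/- Let f : ℝⁿ → ℝ be continuously differentiable with L_f-Lipschitz gradient and bounded below, λ > 0, L > L_f/2, μ ∈ (0,1), and let φ : [0,∞) → [0,∞) satisfy φ(0) = 0, be differentiable, concave, strictly increasing on (0,∞), with φ' continuous on (0,∞). Let (x^k, ε^k) be IRL1 iterates (ε^{k+1} = μ ε^k with ε⁰ > 0 componentwise; x^{k+1} a global minimizer of G(x; x^k, ε^k) = ∇f(x^k)ᵀx + (L/2)‖x − x^k‖² + λ Σ_i φ'(|x^k_i| + ε^k_i)|x_i|), and let x* be a cluster point of (x^k). Let A* = {i : x*_i = 0} and I* = {i : x*_i ≠ 0}. Then x* is a minimizer of the function x ↦ ∇f(x*)ᵀx + (L/2)‖x − x*‖² + λ Σ_{i∈I*} φ'(|x*_i|)|x_i| over the subspace {x ∈ ℝⁿ : x_i = 0 for all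 i ∈ A*}; consequently, for every i ∈ I*, ∇_i f(x*) + λ φ'(|x*_i|) sign(x*_i) = 0. -/
/-! The smoothed objective `Φ k = f (x k) + lam * ∑ i, φ (|x k i| + ε k i)` is a Lyapunov function.
Concavity of `φ` bounds the change of the penalty by its linearization, whose slopes are exactly
the weights (`concave_tangent`); the quadratic model is `L`-strongly convex and minimized at
`x (k + 1)`, which gains `L * ‖x (k + 1) - x k‖ ^ 2` in its linear part (`prox_descent`). With the
descent inequality for `f` this gives
`Φ (k + 1) ≤ Φ k - (L - Lf / 2) * ‖x (k + 1) - x k‖ ^ 2`. Since `Φ` is bounded below, successive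
iterates get arbitrarily close (`tendsto_zero_of_descent`), so along the subsequence both `x k` and
`x (k + 1)` converge to `xs`. On the support of `xs` the weights converge by continuity of `φ'`; off
the support they may blow up, but the test vector vanishes there and the corresponding terms at
`x (k + 1)` are nonnegative, so they can be dropped before passing to the limit in the
minimality inequality. Stationarity then follows by testing with `xs + t • eᵢ` for small `t`, along
which the model is differentiable.
-/


open Filter Topology
open scoped RealInnerProductSpace

lemma concave_tangent_s4 {φ dφ : ℝ → ℝ} (hφd : ∀ t, 0 < t → HasDerivAt φ (dφ t) t)
    (hconc : ConcaveOn ℝ (Set.Ioi 0) φ) {s t : ℝ} (hs : 0 < s) (ht : 0 < t) :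
    φ s ≤ φ t + dφ t * (s - t) := by
  rcases lt_trichotomy s t with h | rfl | h
  · have := hconc.le_slope_of_hasDerivAt hs ht h (hφd t ht)
    rw [slope_def_field, le_div_iff₀ (by linarith)] at this
    linarith
  · simp
  · have := hconc.slope_le_of_hasDerivAt ht hs h (hφd t ht)
    rw [slope_def_field, div_le_iff₀ (by linarith)] at this
    linarith

/-- A strictly increasing concave function has nonnegative slopes: compare the tangent at `t` with
the value at `t + 1`. -/
lemma weight_nonneg {φ dφ : ℝ → ℝ} (hφd : ∀ t, 0 < t → HasDerivAt φ (dφ t) t)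
    (hconc : ConcaveOn ℝ (Set.Ioi 0) φ) (hmono : StrictMonoOn φ (Set.Ioi 0))
    {t : ℝ} (ht : 0 < t) : 0 ≤ dφ t := by
  have h1 := concave_tangent_s4 hφd hconc (s := t + 1) (by linarith) ht
  have h2 := hmono (a := t) (b := t + 1) ht (by simp; linarith) (by linarith)
  linarith

/-- Strong convexity of the weighted-`ℓ¹` model, expressed at its minimizer `p` against the
prox-centre `q`. -/
lemma prox_descent {n : ℕ} (g p q : EuclideanSpace ℝ (Fin n)) (L lam : ℝ) (w : Fin n → ℝ)
    (hlam : 0 < lam) (hw : ∀ i, 0 ≤ w i)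
    (hmin : ∀ y : EuclideanSpace ℝ (Fin n),
      ⟪g, p⟫ + L / 2 * ‖p - q‖ ^ 2 + lam * ∑ i, w i * |p i|
        ≤ ⟪g, y⟫ + L / 2 * ‖y - q‖ ^ 2 + lam * ∑ i, w i * |y i|) :
    ⟪g, p - q⟫ + L * ‖p - q‖ ^ 2 + lam * ∑ i, w i * (|p i| - |q i|) ≤ 0 := by
  set S := ∑ i, w i * (|p i| - |q i|) with hS
  -- Test minimality on the segment from `p` to `q` and divide by the step length `θ`.
  have key : ∀ θ ∈ Set.Ioo (0 : ℝ) 1,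
      ⟪g, p - q⟫ + L / 2 * (2 - θ) * ‖p - q‖ ^ 2 + lam * S ≤ 0 := by
    rintro θ ⟨h0, h1⟩
    have h := hmin (p - θ • (p - q))
    have e1 : p - θ • (p - q) - q = (1 - θ) • (p - q) := by module
    have e2 : ‖p - θ • (p - q) - q‖ ^ 2 = (1 - θ) ^ 2 * ‖p - q‖ ^ 2 := by
      rw [e1, norm_smul, mul_pow, Real.norm_eq_abs, sq_abs]
    have e3 : ∑ i, w i * |(p - θ • (p - q)) i| ≤ (∑ i, w i * |p i|) - θ * S := by
      rw [hS, Finset.mul_sum, ← Finset.sum_sub_distrib]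
      refine Finset.sum_le_sum fun i _ => ?_
      have : |(p - θ • (p - q)) i| ≤ (1 - θ) * |p i| + θ * |q i| := by
        have e : (p - θ • (p - q)) i = (1 - θ) * p i + θ * q i := by
          simp; ring
        rw [e]
        refine (abs_add_le _ _).trans_eq ?_
        rw [abs_mul, abs_mul, abs_of_pos h0, abs_of_pos (by linarith : 0 < 1 - θ)]
      nlinarith [mul_le_mul_of_nonneg_left this (hw i)]
    rw [e2, inner_sub_right, inner_smul_right] at h
    have e4 := mul_le_mul_of_nonneg_left e3 hlam.le
    have : θ * (⟪g, p - q⟫ + L / 2 * (2 - θ) * ‖p - q‖ ^ 2 + lam * S) ≤ 0 := by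
      nlinarith
    exact nonpos_of_mul_nonpos_right this h0
  have hc : Tendsto (fun θ : ℝ => ⟪g, p - q⟫ + L / 2 * (2 - θ) * ‖p - q‖ ^ 2 + lam * S)
      (𝓝[>] 0) (𝓝 (⟪g, p - q⟫ + L / 2 * (2 - 0) * ‖p - q‖ ^ 2 + lam * S)) := by
    refine Tendsto.mono_left (Continuous.tendsto ?_ 0) nhdsWithin_le_nhds
    fun_prop
  have := le_of_tendsto hc
    (Filter.mem_of_superset (Ioo_mem_nhdsGT one_pos) key)
  linarith

lemma tendsto_zero_of_descent {Φ d : ℕ → ℝ} {c B : ℝ} (hc : 0 < c) (hB : ∀ k, B ≤ Φ k)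
    (h : ∀ k, Φ (k + 1) ≤ Φ k - c * d k ^ 2) : Tendsto d atTop (𝓝 0) := by
  have hanti : Antitone Φ := antitone_nat_of_succ_le fun k => by
    have := h k
    nlinarith [mul_nonneg hc.le (sq_nonneg (d k))]
  have hlim := tendsto_atTop_ciInf hanti ⟨B, by rintro _ ⟨k, rfl⟩; exact hB k⟩
  have hdiff : Tendsto (fun k => (Φ k - Φ (k + 1)) / c) atTop (𝓝 0) := by
    simpa using (hlim.sub (hlim.comp (tendsto_add_atTop_nat 1))).div_const c
  have hsq : Tendsto (fun k => d k ^ 2) atTop (𝓝 0) :=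
    squeeze_zero (fun k => sq_nonneg _)
      (fun k => by rw [le_div_iff₀ hc]; linarith [h k]) hdiff
  have := hsq.sqrt
  simp only [Real.sqrt_sq_eq_abs, Real.sqrt_zero] at this
  exact (tendsto_zero_iff_abs_tendsto_zero d).2 this

/-- Off zero the absolute value is locally affine with slope `sign a`. -/
lemma abs_add_eventually {a : ℝ} (ha : a ≠ 0) :
    ∀ᶠ t in 𝓝 (0 : ℝ), |a + t| = |a| + Real.sign a * t := by
  have hc : Tendsto (fun t : ℝ => a + t) (𝓝 0) (𝓝 a) := by
    simpa using (by fun_prop : Continuous fun t : ℝ => a + t).tendsto 0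
  rcases lt_or_gt_of_ne ha with h | h
  · filter_upwards [hc.eventually_lt_const h] with t ht
    rw [abs_of_neg ht, abs_of_neg h, Real.sign_of_neg h]; ring
  · filter_upwards [hc.eventually_const_lt h] with t ht
    rw [abs_of_pos ht, abs_of_pos h, Real.sign_of_pos h]; ring

/-- Any cluster point `x*` of the IRL1 iterates minimizes the
local model `x ↦ ∇f(x*)ᵀx + (L/2)‖x - x*‖² + λ Σ_{i ∈ I*} φ'(|x*_i|)|x_i|`
over the subspace `{x : x_i = 0 for i ∈ A*}`; consequently it satisfies the
first-order stationarity condition on its support `I* = {i : x*_i ≠ 0}`. -/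
theorem irl1_cluster_point_is_stationary
    {n : ℕ} (f : EuclideanSpace ℝ (Fin n) → ℝ)
    (f' : EuclideanSpace ℝ (Fin n) → EuclideanSpace ℝ (Fin n))
    (Lf lam L μ : ℝ) (φ dφ : ℝ → ℝ) (B : ℝ)
    (hLf : 0 < Lf)
    (hgrad : ∀ x, HasGradientAt f (f' x) x) (hf'cont : Continuous f')
    (hlip : ∀ x y, f x - f y ≤ ⟪f' y, x - y⟫ + Lf / 2 * ‖x - y‖ ^ 2)
    (hbdd : ∀ x, B ≤ f x)
    (hlam : 0 < lam) (hL : Lf / 2 < L) (hμ : μ ∈ Set.Ioo (0 : ℝ) 1)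
    (hφ0 : φ 0 = 0)
    (hφmap : ∀ t, 0 ≤ t → 0 ≤ φ t)
    (hφd : ∀ t, 0 < t → HasDerivAt φ (dφ t) t)
    (hconc : ConcaveOn ℝ (Set.Ioi 0) φ)
    (hmono : StrictMonoOn φ (Set.Ioi 0))
    (hdφcont : ContinuousOn dφ (Set.Ioi 0))
    (x : ℕ → EuclideanSpace ℝ (Fin n)) (ε : ℕ → Fin n → ℝ)
    (hε0 : ∀ i, 0 < ε 0 i)
    (hεrec : ∀ k i, ε (k + 1) i = μ * ε k i)
    (hmin : ∀ k, ∀ y : EuclideanSpace ℝ (Fin n),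
      ⟪f' (x k), x (k + 1)⟫ + L / 2 * ‖x (k + 1) - x k‖ ^ 2
          + lam * ∑ i, dφ (|x k i| + ε k i) * |x (k + 1) i|
        ≤ ⟪f' (x k), y⟫ + L / 2 * ‖y - x k‖ ^ 2
          + lam * ∑ i, dφ (|x k i| + ε k i) * |y i|)
    (xs : EuclideanSpace ℝ (Fin n))
    (hcluster : ∃ σ : ℕ → ℕ, StrictMono σ ∧ Tendsto (x ∘ σ) atTop (𝓝 xs)) :
    (∀ y : EuclideanSpace ℝ (Fin n), (∀ i, xs i = 0 → y i = 0) →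
      ⟪f' xs, xs⟫ + L / 2 * ‖xs - xs‖ ^ 2
          + lam * ∑ i ∈ Finset.univ.filter (fun i => xs i ≠ 0), dφ |xs i| * |xs i|
        ≤ ⟪f' xs, y⟫ + L / 2 * ‖y - xs‖ ^ 2
          + lam * ∑ i ∈ Finset.univ.filter (fun i => xs i ≠ 0), dφ |xs i| * |y i|) ∧
    (∀ i, xs i ≠ 0 → f' xs i + lam * dφ |xs i| * Real.sign (xs i) = 0) := by
  have hεpos : ∀ k i, 0 < ε k i := by
    intro k
    induction k with
    | zero => exact hε0
    | succ k ih => intro i; rw [hεrec]; exact mul_pos hμ.1 (ih i)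
  have hpos : ∀ k i, 0 < |x k i| + ε k i := fun k i =>
    add_pos_of_nonneg_of_pos (abs_nonneg _) (hεpos k i)
  have hw : ∀ k i, 0 ≤ dφ (|x k i| + ε k i) := fun k i =>
    weight_nonneg hφd hconc hmono (hpos k i)
  have hstep : Tendsto (fun k => ‖x (k + 1) - x k‖) atTop (𝓝 0) := by
    refine tendsto_zero_of_descent (Φ := fun k => f (x k) + lam * ∑ i, φ (|x k i| + ε k i))
      (c := L - Lf / 2) (B := B) (by linarith) (fun k => ?_) (fun k => ?_)
    · have : 0 ≤ ∑ i, φ (|x k i| + ε k i) :=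
        Finset.sum_nonneg fun i _ => hφmap _ (hpos k i).le
      have := mul_nonneg hlam.le this
      linarith [hbdd (x k)]
    · have h1 := prox_descent _ _ _ L lam _ hlam (hw k) (hmin k)
      have h2 : ∑ i, φ (|x (k + 1) i| + ε (k + 1) i) ≤ ∑ i, φ (|x k i| + ε k i)
          + ∑ i, dφ (|x k i| + ε k i) * (|x (k + 1) i| - |x k i|) := by
        rw [← Finset.sum_add_distrib]
        refine Finset.sum_le_sum fun i _ => ?_
        refine (concave_tangent_s4 hφd hconc (hpos (k + 1) i) (hpos k i)).trans ?_
        have hle : ε (k + 1) i ≤ ε k i := by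
          rw [hεrec]; exact mul_le_of_le_one_left (hεpos k i).le hμ.2.le
        exact add_le_add le_rfl (mul_le_mul_of_nonneg_left (by linarith) (hw k i))
      have h3 := mul_le_mul_of_nonneg_left h2 hlam.le
      have h4 := hlip (x (k + 1)) (x k)
      linarith
  obtain ⟨σ, hσ, hx⟩ := hcluster
  have hx' : Tendsto (fun k => x (σ k + 1)) atTop (𝓝 xs) := by
    have h0 : Tendsto (fun k => x (σ k + 1) - x (σ k)) atTop (𝓝 0) :=
      tendsto_zero_iff_norm_tendsto_zero.2 (hstep.comp hσ.tendsto_atTop)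
    simpa using h0.add hx
  have hcoord : ∀ {u : ℕ → EuclideanSpace ℝ (Fin n)} (i : Fin n),
      Tendsto u atTop (𝓝 xs) → Tendsto (fun k => |u k i|) atTop (𝓝 |xs i|) := fun i hu =>
    (((by fun_prop : Continuous fun z : EuclideanSpace ℝ (Fin n) => |z i|).tendsto xs).comp hu)
  have hε : ∀ i, Tendsto (fun k => ε (σ k) i) atTop (𝓝 0) := by
    intro i
    have he : ∀ k, ε k i = μ ^ k * ε 0 i := by
      intro k
      induction k with
      | zero => simp
      | succ k ih => rw [hεrec, ih]; ring
    have h := (tendsto_pow_atTop_nhds_zero_of_lt_one hμ.1.le hμ.2).mul_const (ε 0 i)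
    rw [zero_mul] at h
    exact (h.congr fun k => (he k).symm).comp hσ.tendsto_atTop
  have hwlim : ∀ i, xs i ≠ 0 →
      Tendsto (fun k => dφ (|x (σ k) i| + ε (σ k) i)) atTop (𝓝 (dφ |xs i|)) := by
    intro i hi
    have hc : ContinuousAt dφ |xs i| := hdφcont.continuousAt (Ioi_mem_nhds (abs_pos.2 hi))
    have h := (hcoord i hx).add (hε i)
    rw [add_zero] at h
    exact hc.tendsto.comp h
  have hg : Tendsto (fun k => f' (x (σ k))) atTop (𝓝 (f' xs)) := (hf'cont.tendsto xs).comp hx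
  have hxσ : Tendsto (fun k => x (σ k)) atTop (𝓝 xs) := hx
  have main : ∀ y : EuclideanSpace ℝ (Fin n), (∀ i, xs i = 0 → y i = 0) →
      ⟪f' xs, xs⟫ + L / 2 * ‖xs - xs‖ ^ 2
          + lam * ∑ i ∈ Finset.univ.filter (fun i => xs i ≠ 0), dφ |xs i| * |xs i|
        ≤ ⟪f' xs, y⟫ + L / 2 * ‖y - xs‖ ^ 2
          + lam * ∑ i ∈ Finset.univ.filter (fun i => xs i ≠ 0), dφ |xs i| * |y i| := by
    intro y hy
    have hl : Tendsto (fun k => ⟪f' (x (σ k)), x (σ k + 1)⟫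
        + L / 2 * ‖x (σ k + 1) - x (σ k)‖ ^ 2
        + lam * ∑ i ∈ Finset.univ.filter (fun i => xs i ≠ 0),
          dφ (|x (σ k) i| + ε (σ k) i) * |x (σ k + 1) i|) atTop
        (𝓝 (⟪f' xs, xs⟫ + L / 2 * ‖xs - xs‖ ^ 2
          + lam * ∑ i ∈ Finset.univ.filter (fun i => xs i ≠ 0), dφ |xs i| * |xs i|)) := by
      refine ((hg.inner hx').add (((hx'.sub hxσ).norm.pow 2).const_mul _)).add
        (Tendsto.const_mul _ (tendsto_finsetSum _ fun i hi => ?_))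
      exact (hwlim i (Finset.mem_filter.1 hi).2).mul (hcoord i hx')
    have hr : Tendsto (fun k => ⟪f' (x (σ k)), y⟫
        + L / 2 * ‖y - x (σ k)‖ ^ 2
        + lam * ∑ i ∈ Finset.univ.filter (fun i => xs i ≠ 0),
          dφ (|x (σ k) i| + ε (σ k) i) * |y i|) atTop
        (𝓝 (⟪f' xs, y⟫ + L / 2 * ‖y - xs‖ ^ 2
          + lam * ∑ i ∈ Finset.univ.filter (fun i => xs i ≠ 0), dφ |xs i| * |y i|)) := by
      refine ((hg.inner tendsto_const_nhds).add
        (((tendsto_const_nhds.sub hxσ).norm.pow 2).const_mul _)).add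
        (Tendsto.const_mul _ (tendsto_finsetSum _ fun i hi => ?_))
      exact (hwlim i (Finset.mem_filter.1 hi).2).mul_const _
    refine le_of_tendsto_of_tendsto' hl hr fun k => ?_
    have h := hmin (σ k) y
    have e1 : ∑ i ∈ Finset.univ.filter (fun i => xs i ≠ 0),
          dφ (|x (σ k) i| + ε (σ k) i) * |x (σ k + 1) i|
        ≤ ∑ i, dφ (|x (σ k) i| + ε (σ k) i) * |x (σ k + 1) i| :=
      Finset.sum_le_sum_of_subset_of_nonneg (Finset.filter_subset _ _)
        fun i _ _ => mul_nonneg (hw _ i) (abs_nonneg _)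
    have e2 : ∑ i ∈ Finset.univ.filter (fun i => xs i ≠ 0),
          dφ (|x (σ k) i| + ε (σ k) i) * |y i|
        = ∑ i, dφ (|x (σ k) i| + ε (σ k) i) * |y i| := by
      refine Finset.sum_subset (Finset.filter_subset _ _) fun i _ hi => ?_
      have : xs i = 0 := by simpa using hi
      simp [hy i this]
    rw [e2]
    linarith [mul_le_mul_of_nonneg_left e1 hlam.le]
  refine ⟨main, fun i hi => ?_⟩
  set c := f' xs i + lam * dφ |xs i| * Real.sign (xs i) with hcdef
  have hloc : IsLocalMin (fun t : ℝ => c * t + L / 2 * t ^ 2) 0 := by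
    filter_upwards [abs_add_eventually hi] with t ht
    have h := main (xs + t • EuclideanSpace.single i 1) (fun j hj => by
      have : j ≠ i := by rintro rfl; exact hi hj
      simp [hj, this])
    have e1 : ∑ j ∈ Finset.univ.filter (fun j => xs j ≠ 0),
          dφ |xs j| * |(xs + t • EuclideanSpace.single i (1 : ℝ)) j|
        = ∑ j ∈ Finset.univ.filter (fun j => xs j ≠ 0), dφ |xs j| * |xs j|
          + dφ |xs i| * (Real.sign (xs i) * t) := by
      rw [← sub_eq_iff_eq_add', ← Finset.sum_sub_distrib,
        Finset.sum_eq_single_of_mem i (by simp [hi]) (fun j _ hj => by simp [hj])]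
      simp only [PiLp.add_apply, PiLp.smul_apply, PiLp.single_apply, if_true,
        smul_eq_mul, mul_one, ht]
      ring
    have e2 : ⟪f' xs, xs + t • EuclideanSpace.single i (1 : ℝ)⟫ = ⟪f' xs, xs⟫ + t * f' xs i := by
      simp [inner_add_right, inner_smul_right, EuclideanSpace.inner_single_right]
    have e3 : ‖xs + t • EuclideanSpace.single i (1 : ℝ) - xs‖ ^ 2 = t ^ 2 := by
      simp [norm_smul]
    rw [e1, e2, e3, sub_self, norm_zero] at h
    simp only [hcdef]
    linarith
  have hd : HasDerivAt (fun t : ℝ => c * t + L / 2 * t ^ 2) c 0 := by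
    have h := ((hasDerivAt_id' (0 : ℝ)).const_mul c).add
      (((hasDerivAt_id' (0 : ℝ)).pow 2).const_mul (L / 2))
    exact h.congr_deriv (by simp)
  exact hloc.hasDerivAt_eq_zero hd
end

section
/- Let f : ℝⁿ → ℝ be differentiable, λ > 0, C > 0, and let φ : [0,∞) → [0,∞) be differentiable on (0,∞) with φ' strictly decreasing on (0,∞). Suppose δ > 0 satisfies φ'(δ) = C/λ. Let x* ∈ ℝⁿ satisfy ‖∇f(x*)‖_∞ ≤ C and the first-order stationarity condition on its support: for every i with x*_i ≠ 0, ∇_i f(x*) + λ φ'(|x*_i|) sign(x*_i) = 0. Then every nonzero component of x* is bounded away from zero: |x*_i| ≥ δ for all i with x*_i ≠ 0. -/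
/-- If `φ'` is strictly decreasing on `(0, ∞)`, `φ'(δ) = C/λ`,
`‖∇f(x*)‖_∞ ≤ C`, and `x*` is first-order stationary on its support, then every
nonzero component of `x*` satisfies `|x*_i| ≥ δ`. -/
theorem stationary_point_support_lower_bound
    {n : ℕ} (f : EuclideanSpace ℝ (Fin n) → ℝ)
    (f' : EuclideanSpace ℝ (Fin n) → EuclideanSpace ℝ (Fin n))
    (lam C δ : ℝ) (φ dφ : ℝ → ℝ)
    (hgrad : ∀ x, HasGradientAt f (f' x) x)
    (hlam : 0 < lam) (hC : 0 < C)
    (hφd : ∀ t, 0 < t → HasDerivAt φ (dφ t) t)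
    (hanti : StrictAntiOn dφ (Set.Ioi 0))
    (hδ : 0 < δ) (hδeq : dφ δ = C / lam)
    (xs : EuclideanSpace ℝ (Fin n))
    (hbound : ∀ i, |f' xs i| ≤ C)
    (hstat : ∀ i, xs i ≠ 0 → f' xs i + lam * dφ |xs i| * Real.sign (xs i) = 0) :
    ∀ i, xs i ≠ 0 → δ ≤ |xs i| := by
  intro i hi
  by_contra! hlt
  -- A component smaller than `δ` has a penalty slope exceeding `C / lam`, so stationarity
  -- would need a partial derivative of `f` of absolute value greater than `C`.
  have hslope : C / lam < dφ |xs i| :=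
    hδeq ▸ hanti (Set.mem_Ioi.2 (abs_pos.2 hi)) (Set.mem_Ioi.2 hδ) hlt
  have hlarge : C < lam * dφ |xs i| := (div_lt_iff₀' hlam).1 hslope
  have hs := hstat i hi
  have hb := abs_le.1 (hbound i)
  rcases Real.sign_apply_eq_of_ne_zero (xs i) hi with h | h <;>
    rw [h] at hs <;> linarith [hb.1, hb.2]
end

section
/- Let η ∈ [0,1], β > 0, c > 0, and let (F_k)_{k≥0}, (E_k)_{k≥0}, (J_k)_{k≥0}, (χ_k)_{k≥0}, (d_k)_{k≥0} be real sequences with χ_k ≥ 0 and d_k ≥ 0 for all k, satisfying the averaging recursion J_0 = 1, E_0 = F_0, J_{k+1} = η J_k + 1, E_{k+1} = (η J_k E_k + F_{k+1}) / J_{k+1}, and such that for every k at least one of the following holds: (a) F_{k+1} ≤ E_k − β χ_k (accelerated step accepted by the nonmonotone condition), or (b) F_{k+1} ≤ F_k − c d_k (unaccelerated step). Then for all k: F_k ≤ E_k, E_{k+1} ≤ E_k, and consequently F_k ≤ E_0 = F_0 for every k (so the iterates remain in the initial level set of the objective). -/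
/-!
Since `J (k + 1) = η J k + 1` with `J k > 0`, the average `E (k + 1)` is a convex combination of
`E k` and `F (k + 1)`. Once `F (k + 1) ≤ E k`, it therefore lies between them:
`F (k + 1) ≤ E (k + 1) ≤ E k`. The accelerated condition gives `F (k + 1) ≤ E k` outright, and the
unaccelerated one gives it from the inductive hypothesis `F k ≤ E k`. Monotonicity of `E` then
yields `F k ≤ E k ≤ E 0 = F 0`.
-/

/-- Monotonicity of the nonmonotone line-search averages: if
`J₀ = 1`, `E₀ = F₀`, `J_{k+1} = η J_k + 1`,
`E_{k+1} = (η J_k E_k + F_{k+1}) / J_{k+1}`, and at every step either the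
accelerated condition `F_{k+1} ≤ E_k - β χ_k` or the unaccelerated descent
`F_{k+1} ≤ F_k - c d_k` holds, then `F_k ≤ E_k`, `E_{k+1} ≤ E_k`, and
`F_k ≤ E₀ = F₀` for every `k`. -/
theorem nonmonotone_average_monotonicity
    (η β c : ℝ) (F E J χ d : ℕ → ℝ)
    (hη : η ∈ Set.Icc (0 : ℝ) 1) (hβ : 0 < β) (hc : 0 < c)
    (hχ : ∀ k, 0 ≤ χ k) (hd : ∀ k, 0 ≤ d k)
    (hJ0 : J 0 = 1) (hE0 : E 0 = F 0)
    (hJ : ∀ k, J (k + 1) = η * J k + 1)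
    (hE : ∀ k, E (k + 1) = (η * J k * E k + F (k + 1)) / J (k + 1))
    (hstep : ∀ k, F (k + 1) ≤ E k - β * χ k ∨ F (k + 1) ≤ F k - c * d k) :
    (∀ k, F k ≤ E k) ∧ (∀ k, E (k + 1) ≤ E k) ∧ (∀ k, F k ≤ F 0) := by
  have hJpos : ∀ k, 0 < J k := by
    intro k
    induction k with
    | zero => rw [hJ0]; exact one_pos
    | succ k ih =>
      rw [hJ]
      have := mul_nonneg hη.1 ih.le
      linarith
  have hFE_succ : ∀ k, F k ≤ E k → F (k + 1) ≤ E k := by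
    intro k hk
    have h1 := mul_nonneg hβ.le (hχ k)
    have h2 := mul_nonneg hc.le (hd k)
    rcases hstep k with h | h <;> linarith
  have hFE : ∀ k, F k ≤ E k := by
    intro k
    induction k with
    | zero => exact hE0.ge
    | succ k ih =>
      have h := mul_le_mul_of_nonneg_left (hFE_succ k ih) (mul_nonneg hη.1 (hJpos k).le)
      rw [hE, le_div_iff₀ (hJpos (k + 1)), hJ]
      linarith
  have hE_succ : ∀ k, E (k + 1) ≤ E k := by
    intro k
    have h := hFE_succ k (hFE k)
    rw [hE, div_le_iff₀ (hJpos (k + 1)), hJ]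
    linarith
  exact ⟨hFE, hE_succ, fun k =>
    (hFE k).trans ((antitone_nat_of_succ_le hE_succ (Nat.zero_le k)).trans hE0.le)⟩
end
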